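/- arXiv:2303.15194 — 2 statements merged into one kernel-verified Lean document; each statement's English description precedes it below -/
import Mathlib

section
/- Shortening a blue cycle by one: let k ≥ 3, n > 3k − 3, and suppose the board initially contains a blue cycle of length n + 1. Then r̃_H(C_k, C_n) ≤ k + 2, i.e., Builder can force a red C_k or a blue C_n within k + 2 further rounds. -/
/-!
Label the blue cycle `0, …, n`. Once a chord `{i, i + 2}` is blue, it bypasses one vertex and
closes a blue `C_n`; so do two blue chords `{p, q}`, `{p', q'}` with `p < p' ≤ q < q'` and
`p' + q' = p + q + 3`. Painter therefore has to color every chord completing such a configuration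
red, and Builder wins within `k` rounds whenever some `k`-cycle has only red and forced edges.

Builder first selects `{0, 2k - 2}`. If it is red, it closes the cycle `0, 2, …, 2k - 2`. If it is
blue, Builder selects `{k, 3k - 3}`. A blue answer forces `{k - 2, 3k - 4}`, which closes the cycle
`k - 2, k, …, 3k - 4`. A red answer is itself an edge of a suitable cycle, made of chords of length
two and one chord that crosses `{0, 2k - 2}`.
-/

open SimpleGraph

/-- A board state: the set of red edges and the set of blue edges. -/
abbrev Board : Type := Set (Sym2 ℕ) × Set (Sym2 ℕ)

/-- The set of already colored edges of a board. -/
def Board.colored (B : Board) : Set (Sym2 ℕ) := B.1 ∪ B.2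

/-- A Builder strategy selects an edge given the current board. -/
abbrev BuilderStrat : Type := Board → Sym2 ℕ

/-- A Painter strategy colors the selected edge (true = red, false = blue). -/
abbrev PainterStrat : Type := Board → Sym2 ℕ → Bool

/-- The board after `t` rounds of play from `init`. -/
def playGame (b : BuilderStrat) (p : PainterStrat) (init : Board) : ℕ → Board
  | 0 => init
  | t + 1 =>
      let B := playGame b p init t
      let e := b B
      if p B e then (insert e B.1, B.2) else (B.1, insert e B.2)

/-- Builder's strategy is valid from `init`: along any play it always selects a
previously unselected non-loop edge. -/
def ValidFrom (b : BuilderStrat) (init : Board) : Prop :=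
  ∀ p : PainterStrat, ∀ t : ℕ,
    ¬ (b (playGame b p init t)).IsDiag ∧
      b (playGame b p init t) ∉ (playGame b p init t).colored

/-- Builder can force the winning condition `W` within `t` rounds, starting from `init`. -/
def BuilderWinsIn (init : Board) (W : Board → Prop) (t : ℕ) : Prop :=
  ∃ b : BuilderStrat, ValidFrom b init ∧
    ∀ p : PainterStrat, ∃ s, s ≤ t ∧ W (playGame b p init s)

/-- `G` contains a copy of `H`. -/
def HasCopy {α β : Type} (H : SimpleGraph α) (G : SimpleGraph β) : Prop :=
  ∃ f : α ↪ β, ∀ x y, H.Adj x y → G.Adj (f x) (f y)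

/-- The red part of the board contains a copy of `H`. -/
def RedCopy {α : Type} (H : SimpleGraph α) (B : Board) : Prop :=
  HasCopy H (fromEdgeSet B.1)

/-- The blue part of the board contains a copy of `H`. -/
def BlueCopy {α : Type} (H : SimpleGraph α) (B : Board) : Prop :=
  HasCopy H (fromEdgeSet B.2)

/-- The empty board. -/
def emptyBoard : Board := (∅, ∅)

/-- Winning condition: a red `C_k` or a blue `C_n`. -/
def WinCC (k n : ℕ) (B : Board) : Prop :=
  RedCopy (cycleGraph k) B ∨ BlueCopy (cycleGraph n) B

/-- Winning condition: a red `C_k` or a blue path on `n` vertices. -/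
def WinCP (k n : ℕ) (B : Board) : Prop :=
  RedCopy (cycleGraph k) B ∨ BlueCopy (pathGraph n) B

/-- A board consisting of a single blue cycle on the vertices `0, …, m-1`. -/
def blueCycleBoard (m : ℕ) : Board :=
  (∅, {e | ∃ i : ℕ, i < m ∧ e = s(i, (i + 1) % m)})

/-- A board consisting of a single blue path on the vertices `0, …, m-1`. -/
def bluePathBoard (m : ℕ) : Board :=
  (∅, {e | ∃ i : ℕ, i + 1 < m ∧ e = s(i, i + 1)})

/-- The board obtained from `B` when Painter colors the edge `e`, red if `red` is `true` and
blue otherwise. -/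
def Board.paint (B : Board) (e : Sym2 ℕ) (red : Bool) : Board :=
  if red then (insert e B.1, B.2) else (B.1, insert e B.2)

theorem Board.colored_paint (B : Board) (e : Sym2 ℕ) (red : Bool) :
    (B.paint e red).colored = insert e B.colored := by
  cases red
  · exact Set.union_insert
  · exact Set.insert_union

theorem Board.finite_colored_paint {B : Board} (hB : B.colored.Finite) (e : Sym2 ℕ) (red : Bool) :
    (B.paint e red).colored.Finite := by
  rw [colored_paint]
  exact hB.insert e

theorem playGame_succ (b : BuilderStrat) (p : PainterStrat) (init : Board) (t : ℕ) :
    playGame b p init (t + 1) =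
      (playGame b p init t).paint (b (playGame b p init t))
        (p (playGame b p init t) (b (playGame b p init t))) :=
  rfl

theorem finite_colored_playGame (b : BuilderStrat) (p : PainterStrat) {init : Board}
    (h : init.colored.Finite) (t : ℕ) : (playGame b p init t).colored.Finite := by
  induction t with
  | zero => exact h
  | succ t ih => exact Board.finite_colored_paint ih _ _

theorem colored_subset_colored_playGame (b : BuilderStrat) (p : PainterStrat) (init : Board)
    (t : ℕ) : init.colored ⊆ (playGame b p init t).colored := by
  induction t with
  | zero => exact subset_rfl
  | succ t ih =>
    rw [playGame_succ, Board.colored_paint]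
    exact ih.trans (Set.subset_insert _ _)

theorem ValidFrom.mem_red_playGame_iff {b : BuilderStrat} {init : Board} (hb : ValidFrom b init)
    (p : PainterStrat) {e : Sym2 ℕ} (he : e ∈ init.colored) (t : ℕ) :
    e ∈ (playGame b p init t).1 ↔ e ∈ init.1 := by
  induction t with
  | zero => rfl
  | succ t ih =>
    have hne : e ≠ b (playGame b p init t) := fun h =>
      (hb p t).2 (h ▸ colored_subset_colored_playGame b p init t he)
    rw [playGame_succ, ← ih, Board.paint]
    split_ifs
    · exact Set.mem_insert_iff.trans (or_iff_right hne)
    · rfl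

theorem exists_uncolored_edge {B : Board} (h : B.colored.Finite) :
    ∃ e : Sym2 ℕ, ¬ e.IsDiag ∧ e ∉ B.colored := by
  have hinj : Function.Injective fun i : ℕ => s(0, i + 1) := fun i j hij => by simpa using hij
  obtain ⟨_, ⟨i, rfl⟩, hi⟩ := (Set.infinite_range_of_injective hinj).exists_notMem_finite h
  exact ⟨_, by simp, hi⟩

theorem exists_validFrom {init : Board} (h : init.colored.Finite) : ∃ b, ValidFrom b init := by
  have hfresh : ∀ B : Board, ∃ e : Sym2 ℕ, B.colored.Finite → ¬ e.IsDiag ∧ e ∉ B.colored :=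
    fun B => by
      by_cases hB : B.colored.Finite
      · exact (exists_uncolored_edge hB).imp fun _ he _ => he
      · exact ⟨s(0, 0), fun hB' => absurd hB' hB⟩
  choose b hb using hfresh
  exact ⟨b, fun p t => hb _ (finite_colored_playGame b p h t)⟩

open Classical in
/-- The Builder strategy that selects `e` first, and afterwards follows `σ true` or `σ false`
according to whether Painter colored `e` red or blue. -/
noncomputable def BuilderStrat.afterEdge (e : Sym2 ℕ) (σ : Bool → BuilderStrat) : BuilderStrat :=
  fun B => if e ∈ B.colored then σ (decide (e ∈ B.1)) B else e

open BuilderStrat in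
theorem playGame_afterEdge {B : Board} {e : Sym2 ℕ} {σ : Bool → BuilderStrat}
    (hσ : ∀ c, ValidFrom (σ c) (B.paint e c)) (he : e ∉ B.colored) (p : PainterStrat) (t : ℕ) :
    playGame (afterEdge e σ) p B (t + 1) = playGame (σ (p B e)) p (B.paint e (p B e)) t ∧
      afterEdge e σ (playGame (afterEdge e σ) p B (t + 1)) =
        σ (p B e) (playGame (σ (p B e)) p (B.paint e (p B e)) t) := by
  have hfirst : afterEdge e σ B = e := if_neg he
  generalize hc : p B e = c
  have hcolored : e ∈ (B.paint e c).colored := by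
    rw [Board.colored_paint]
    exact Set.mem_insert e _
  have hred : e ∈ (B.paint e c).1 ↔ c = true := by
    cases c
    · simpa [Board.paint] using fun h => he (Or.inl h)
    · simp [Board.paint]
  have hagree : ∀ s, afterEdge e σ (playGame (σ c) p (B.paint e c) s) =
      σ c (playGame (σ c) p (B.paint e c) s) := fun s => by
    rw [afterEdge, if_pos (colored_subset_colored_playGame _ p _ s hcolored)]
    simp only [(hσ c).mem_red_playGame_iff p hcolored s, hred, Bool.decide_eq_true]
  have hplay : playGame (afterEdge e σ) p B (t + 1) = playGame (σ c) p (B.paint e c) t := by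
    induction t with
    | zero => rw [playGame_succ, playGame, hfirst, hc, playGame]
    | succ t ih => rw [playGame_succ, ih, hagree, ← playGame_succ]
  exact ⟨hplay, hplay ▸ hagree t⟩

namespace BuilderWinsIn

variable {B : Board} {W : Board → Prop} {e : Sym2 ℕ}

theorem of_win (hB : B.colored.Finite) (hW : W B) (t : ℕ) : BuilderWinsIn B W t :=
  (exists_validFrom hB).imp fun _ hb => ⟨hb, fun _ => ⟨0, t.zero_le, hW⟩⟩

theorem mono {s t : ℕ} (h : BuilderWinsIn B W s) (hst : s ≤ t) : BuilderWinsIn B W t :=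
  h.imp fun _ hb => ⟨hb.1, fun p => (hb.2 p).imp fun _ hr => ⟨hr.1.trans hst, hr.2⟩⟩

theorem of_uncolored {t : ℕ} (hdiag : ¬ e.IsDiag) (he : e ∉ B.colored)
    (h : ∀ c, BuilderWinsIn (B.paint e c) W t) : BuilderWinsIn B W (t + 1) := by
  choose σ hvalid hwin using h
  refine ⟨.afterEdge e σ, fun p s => ?_, fun p => ?_⟩
  · cases s with
    | zero =>
      rw [playGame, BuilderStrat.afterEdge, if_neg he]
      exact ⟨hdiag, he⟩
    | succ s =>
      obtain ⟨hplay, hmove⟩ := playGame_afterEdge hvalid he p s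
      rw [hmove, hplay]
      exact hvalid _ p s
  · obtain ⟨s, hs, hW⟩ := hwin (p B e) p
    exact ⟨s + 1, Nat.succ_le_succ hs, (playGame_afterEdge hvalid he p s).1 ▸ hW⟩

/-- An edge that is already colored need not be selected: Builder then skips that round. -/
theorem select {t : ℕ} (hdiag : ¬ e.IsDiag) (hred : BuilderWinsIn (insert e B.1, B.2) W t)
    (hblue : BuilderWinsIn (B.1, insert e B.2) W t) : BuilderWinsIn B W (t + 1) := by
  by_cases he₁ : e ∈ B.1
  · rw [Set.insert_eq_of_mem he₁] at hred
    exact hred.mono t.le_succ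
  by_cases he₂ : e ∈ B.2
  · rw [Set.insert_eq_of_mem he₂] at hblue
    exact hblue.mono t.le_succ
  · exact of_uncolored hdiag (fun h => h.elim he₁ he₂) (Bool.forall_bool.2 ⟨hblue, hred⟩)

theorem of_forced_red (S : Finset (Sym2 ℕ)) (hB : B.colored.Finite)
    (hS : ∀ e ∈ S, e ∈ B.1 ∨ ¬ e.IsDiag ∧ ∀ R, W (R, insert e B.2))
    (hW : W (B.1 ∪ S, B.2)) : BuilderWinsIn B W S.card := by
  induction S using Finset.induction_on generalizing B with
  | empty => exact of_win hB (by simpa only [Finset.coe_empty, Set.union_empty] using hW) _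
  | insert e S heS ih =>
    rw [Finset.card_insert_of_notMem heS]
    rw [Finset.coe_insert, Set.union_insert, ← Set.insert_union] at hW
    obtain ⟨he, hS⟩ := (Finset.forall_mem_insert _ _ _).1 hS
    have hred : BuilderWinsIn (insert e B.1, B.2) W S.card :=
      ih (Board.finite_colored_paint hB e true)
        (fun f hf => (hS f hf).imp_left (Set.mem_insert_of_mem e)) hW
    rcases he with he | ⟨hdiag, hblue⟩
    · rw [Set.insert_eq_of_mem he] at hred
      exact hred.mono (Nat.le_succ _)
    · exact select hdiag hred (of_win (Board.finite_colored_paint hB e false) (hblue _) _)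

end BuilderWinsIn

/-- The edges of the closed walk `v 0, v 1, …, v (m - 1), v 0`. -/
def cycleEdges {V : Type*} [DecidableEq V] (m : ℕ) (v : ℕ → V) : Finset (Sym2 V) :=
  (Finset.range m).image fun i => s(v i, v ((i + 1) % m))

/-- The vertices `v 0, …, v (m - 1)` form, in this order, a cycle with edges in `E`; the values
`v i` for `m ≤ i` are irrelevant. -/
structure IsCycleIn {V : Type*} [DecidableEq V] (E : Set (Sym2 V)) (m : ℕ) (v : ℕ → V) :
    Prop where
  injOn : Set.InjOn v (Set.Iio m)
  edges_mem : ∀ e ∈ cycleEdges m v, e ∈ E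

section Cycle

variable {V : Type*} [DecidableEq V] {E : Set (Sym2 V)} {m : ℕ} {v : ℕ → V}

theorem forall_mem_cycleEdges_succ {P : Sym2 V → Prop} :
    (∀ e ∈ cycleEdges (m + 1) v, P e) ↔
      (∀ i < m, P s(v i, v (i + 1))) ∧ P s(v m, v 0) := by
  rw [cycleEdges, Finset.forall_mem_image]
  simp only [Finset.mem_range, Nat.forall_lt_succ_right, Nat.mod_self]
  refine and_congr_left' (forall₂_congr fun i hi => ?_)
  rw [Nat.mod_eq_of_lt (Nat.succ_lt_succ hi)]

theorem not_isDiag_of_mem_cycleEdges (hm : 2 ≤ m) (hv : Set.InjOn v (Set.Iio m)) :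
    ∀ e ∈ cycleEdges m v, ¬ e.IsDiag := by
  obtain ⟨m, rfl⟩ := Nat.exists_eq_add_of_le' hm
  refine forall_mem_cycleEdges_succ.2 ⟨fun i hi h => ?_, fun h => ?_⟩
  · exact i.succ_ne_self (hv (by grind) (by grind) h).symm
  · exact m.succ_ne_zero (hv (by grind) (by grind) h)

theorem card_cycleEdges_le (m : ℕ) (v : ℕ → V) : (cycleEdges m v).card ≤ m :=
  Finset.card_image_le.trans_eq (Finset.card_range m)

namespace IsCycleIn

theorem mono {E' : Set (Sym2 V)} (h : IsCycleIn E m v) (hE : E ⊆ E') : IsCycleIn E' m v :=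
  ⟨h.injOn, fun e he => hE (h.edges_mem e he)⟩

theorem step_mem (h : IsCycleIn E (m + 1) v) {i : ℕ} (hi : i < m) : s(v i, v (i + 1)) ∈ E :=
  (forall_mem_cycleEdges_succ.1 h.edges_mem).1 i hi

theorem close_mem (h : IsCycleIn E (m + 1) v) : s(v m, v 0) ∈ E :=
  (forall_mem_cycleEdges_succ.1 h.edges_mem).2

end IsCycleIn

end Cycle

section Copies

variable {V : Type} [DecidableEq V] {E : Set (Sym2 V)} {m n : ℕ} {v : ℕ → V}

theorem hasCopy_cycleGraph_iff (hm : 2 ≤ m) :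
    HasCopy (cycleGraph m) (fromEdgeSet E) ↔ ∃ v, IsCycleIn E m v := by
  obtain ⟨m, rfl⟩ := Nat.exists_eq_add_of_le' hm
  constructor
  · rintro ⟨f, hf⟩
    refine ⟨fun i => f (Fin.ofNat (m + 2) i), fun i hi j hj hij => ?_, ?_⟩
    · simpa [Fin.ext_iff, Nat.mod_eq_of_lt hi, Nat.mod_eq_of_lt hj] using hij
    · refine Finset.forall_mem_image.2 fun i _ => ((fromEdgeSet_adj E).1 (hf _ _ ?_)).1
      refine cycleGraph_adj.2 (Or.inr (sub_eq_iff_eq_add'.2 ?_))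
      ext
      simp [Fin.val_add]
  · rintro ⟨v, hinj, hedges⟩
    have hf : Function.Injective fun i : Fin (m + 2) => v i :=
      fun i j hij => Fin.ext (hinj i.2 j.2 hij)
    have hmem : ∀ x y : Fin (m + 2), y - x = 1 → s(v x, v y) ∈ E := fun x y hxy => by
      obtain rfl := sub_eq_iff_eq_add'.1 hxy
      exact hedges _ (Finset.mem_image.2 ⟨x, Finset.mem_range.2 x.2, by simp [Fin.val_add]⟩)
    refine ⟨⟨_, hf⟩, fun x y hxy => (fromEdgeSet_adj E).2 ⟨?_, hf.ne hxy.ne⟩⟩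
    exact (cycleGraph_adj.1 hxy).elim (fun h => Sym2.eq_swap ▸ hmem y x h) (hmem x y)

namespace IsCycleIn

theorem hasCopy_of_short_chord (h : IsCycleIn E (n + 1) v) {j : ℕ} (hj : j + 2 ≤ n)
    (hchord : s(v j, v (j + 2)) ∈ E) : HasCopy (cycleGraph n) (fromEdgeSet E) := by
  obtain ⟨n, rfl⟩ := Nat.exists_eq_add_of_le' (show 1 ≤ n by omega)
  refine (hasCopy_cycleGraph_iff (by omega)).2
    ⟨fun i => v (if i ≤ j then i else i + 1), fun a ha b hb hab => ?_,
      forall_mem_cycleEdges_succ.2 ⟨fun i hi => ?_, ?_⟩⟩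
  · have := h.injOn (by grind) (by grind) hab
    grind
  · rcases lt_trichotomy i j with hij | rfl | hij
    · simpa only [if_pos hij.le, if_pos (Nat.succ_le_of_lt hij)] using h.step_mem (by omega)
    · simpa only [le_refl, if_true, Nat.not_succ_le_self, if_false] using hchord
    · rw [if_neg (by omega), if_neg (by omega)]
      exact h.step_mem (by omega)
  · rw [if_neg (by omega), if_pos (by omega)]
    exact h.close_mem

/-- The shortened cycle runs through `0, …, p`, then backwards through `q, …, p'`, and then
through `q', …, n`; by `hsum` it misses exactly one vertex. -/
theorem hasCopy_of_crossing_chords (h : IsCycleIn E (n + 1) v) {p q p' q' : ℕ} (hp : p < p')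
    (hpq : p' ≤ q) (hq : q < q') (hn : q' ≤ n) (hsum : p' + q' = p + q + 3)
    (hchord : s(v p, v q) ∈ E) (hchord' : s(v p', v q') ∈ E) :
    HasCopy (cycleGraph n) (fromEdgeSet E) := by
  obtain ⟨n, rfl⟩ := Nat.exists_eq_add_of_le' (show 1 ≤ n by omega)
  refine (hasCopy_cycleGraph_iff (by omega)).2
    ⟨fun i => v (if i ≤ p then i else if i + 2 ≤ q' then p + q + 1 - i else i + 1),
      fun a ha b hb hab => ?_, forall_mem_cycleEdges_succ.2 ⟨fun i hi => ?_, ?_⟩⟩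
  · have := h.injOn (by grind) (by grind) hab
    grind
  · rcases lt_trichotomy i p with hip | rfl | hip
    · rw [if_pos hip.le, if_pos (by omega)]
      exact h.step_mem (by omega)
    · rw [if_pos le_rfl, if_neg (by omega), if_pos (by omega),
        show i + q + 1 - (i + 1) = q by omega]
      exact hchord
    rw [if_neg hip.not_ge, if_neg (show ¬ i + 1 ≤ p by omega)]
    rcases lt_trichotomy (i + 2) q' with hiq | hiq | hiq
    · rw [if_pos hiq.le, if_pos (by omega), Sym2.eq_swap,
        show p + q + 1 - i = p + q + 1 - (i + 1) + 1 by omega]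
      exact h.step_mem (by omega)
    · rw [if_pos hiq.le, if_neg (by omega), show p + q + 1 - i = p' by omega,
        show i + 1 + 1 = q' by omega]
      exact hchord'
    · rw [if_neg (by omega), if_neg (by omega)]
      exact h.step_mem (by omega)
  · rw [if_neg (by omega), if_neg (by omega), if_pos (by omega)]
    exact h.close_mem

theorem hasCopy_insert_short_chord (h : IsCycleIn E (n + 1) v) {i j : ℕ} (hi : i ≤ n)
    (hj : j ≤ n) (hij : j = i + 2 ∨ i = j + 2) :
    HasCopy (cycleGraph n) (fromEdgeSet (insert s(v i, v j) E)) := by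
  have h' := h.mono (Set.subset_insert s(v i, v j) E)
  rcases hij with rfl | rfl
  · exact h'.hasCopy_of_short_chord hj (Set.mem_insert _ _)
  · exact h'.hasCopy_of_short_chord hi (Sym2.eq_swap ▸ Set.mem_insert _ _)

end IsCycleIn

end Copies

theorem BuilderWinsIn.of_forced_red_cycle {B : Board} {k : ℕ} {α : Type} {G : SimpleGraph α}
    (hk : 2 ≤ k) (hB : B.colored.Finite) (w : ℕ → ℕ) (hw : Set.InjOn w (Set.Iio k))
    (hforced : ∀ e ∈ cycleEdges k w, e ∈ B.1 ∨ HasCopy G (fromEdgeSet (insert e B.2))) :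
    BuilderWinsIn B (fun B => RedCopy (cycleGraph k) B ∨ BlueCopy G B) k := by
  have hdiag := not_isDiag_of_mem_cycleEdges hk hw
  have hred : HasCopy (cycleGraph k) (fromEdgeSet (B.1 ∪ cycleEdges k w)) :=
    (hasCopy_cycleGraph_iff hk).2 ⟨w, hw, fun _ he => Or.inr he⟩
  exact (of_forced_red _ hB
    (fun e he => (hforced e he).imp_right fun h => ⟨hdiag e he, fun _ => Or.inr h⟩)
    (Or.inl hred)).mono (card_cycleEdges_le k w)

namespace IsCycleIn

variable {R E : Set (Sym2 ℕ)} {k n : ℕ} {v : ℕ → ℕ}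

theorem builderWinsIn_of_forced_even_chord (hv : IsCycleIn E (n + 1) v) (hk : 2 ≤ k)
    (hfin : (Board.colored (R, E)).Finite) {a : ℕ} (ha : a + 2 * (k - 1) ≤ n)
    (hchord : s(v a, v (a + 2 * (k - 1))) ∈ R ∨
      HasCopy (cycleGraph n) (fromEdgeSet (insert s(v a, v (a + 2 * (k - 1))) E))) :
    BuilderWinsIn (R, E) (WinCC k n) k := by
  obtain ⟨k, rfl⟩ := Nat.exists_eq_add_of_le' (show 1 ≤ k by omega)
  refine .of_forced_red_cycle hk hfin (fun i => v (a + 2 * i)) (fun i hi j hj hij => ?_)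
    (forall_mem_cycleEdges_succ.2 ⟨fun i hi => Or.inr ?_, ?_⟩)
  · have := hv.injOn (by grind) (by grind) hij
    omega
  · exact hv.hasCopy_insert_short_chord (by omega) (by omega) (Or.inl rfl)
  · rw [Sym2.eq_swap]
    exact hchord

/-- The chord from `a` to `a + 2 * (k - 1)` crosses the given one, so Painter must color it red. -/
theorem builderWinsIn_of_blue_odd_chord (hv : IsCycleIn E (n + 1) v) (hk : 2 ≤ k)
    (hfin : (Board.colored (R, E)).Finite) {a : ℕ} (ha : a + 2 * (k - 1) + 1 ≤ n)
    (hblue : s(v (a + 2), v (a + 2 * (k - 1) + 1)) ∈ E) :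
    BuilderWinsIn (R, E) (WinCC k n) k :=
  hv.builderWinsIn_of_forced_even_chord (a := a) hk hfin (by omega) <| Or.inr <|
    (hv.mono (Set.subset_insert _ E)).hasCopy_of_crossing_chords (by omega) (by omega) (by omega)
      ha (by omega) (Set.mem_insert _ _) (Set.mem_insert_of_mem _ hblue)

/-- The red cycle is `k, k - 2, …, r, 2k + 1 - r, 2k + 3 - r, …, 3k - 3` with `r ∈ {1, 2}`; its
edge from `r` to `2k + 1 - r` must become red because it crosses the chord from `0` to `2k - 2`. -/
theorem builderWinsIn_of_blue_even_chord_of_red_odd_chord (hv : IsCycleIn E (n + 1) v) (hk : 2 ≤ k)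
    (hn : 3 * (k - 1) ≤ n) (hfin : (Board.colored (R, E)).Finite)
    (hblue : s(v 0, v (2 * (k - 1))) ∈ E) (hred : s(v k, v (3 * (k - 1))) ∈ R) :
    BuilderWinsIn (R, E) (WinCC k n) k := by
  obtain ⟨k, rfl⟩ := Nat.exists_eq_add_of_le' (show 1 ≤ k by omega)
  refine .of_forced_red_cycle (by omega) hfin
    (fun i => v (if 2 * i < k + 1 then k + 1 - 2 * i else k + 2 * i)) (fun i hi j hj hij => ?_)
    (forall_mem_cycleEdges_succ.2 ⟨fun i hi => Or.inr ?_, Or.inl ?_⟩)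
  · have := hv.injOn (by grind) (by grind) hij
    grind
  · by_cases hcross : 2 * i < k + 1 ∧ k + 1 ≤ 2 * (i + 1)
    · rw [if_pos hcross.1, if_neg hcross.2.not_gt]
      exact (hv.mono (Set.subset_insert _ E)).hasCopy_of_crossing_chords (by omega) (by omega)
        (by omega) (by omega) (by omega) (Set.mem_insert_of_mem _ hblue) (Set.mem_insert _ _)
    · exact hv.hasCopy_insert_short_chord (by grind) (by grind) (by grind)
  · rw [if_neg (by omega), if_pos (by omega), Sym2.eq_swap,
      show k + 2 * k = 3 * (k + 1 - 1) by omega]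
    exact hred

end IsCycleIn

theorem shorten_blue_cycle_by_one_general {B : Board} {k n : ℕ} (hk : 3 ≤ k)
    (hn : 3 * k - 3 ≤ n) (hB : B.colored.Finite) (hcycle : BlueCopy (cycleGraph (n + 1)) B) :
    BuilderWinsIn B (WinCC k n) (k + 2) := by
  obtain ⟨v, hv⟩ := (hasCopy_cycleGraph_iff (by omega)).1 hcycle
  have hdiag : ∀ i j, i < j → j ≤ n → ¬ s(v i, v j).IsDiag := fun i j hij hj h =>
    hij.ne (hv.injOn (by grind) (by grind) h)
  have hB₁ := Board.finite_colored_paint hB s(v 0, v (2 * (k - 1)))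
  have hB₂ := Board.finite_colored_paint (hB₁ false) s(v k, v (3 * (k - 1)))
  have hv₁ := hv.mono (Set.subset_insert s(v 0, v (2 * (k - 1))) _)
  have hv₂ := hv₁.mono (Set.subset_insert s(v k, v (3 * (k - 1))) _)
  refine .select (hdiag 0 (2 * (k - 1)) (by omega) (by omega)) (.mono ?_ k.le_succ)
    (.select (hdiag k (3 * (k - 1)) (by omega) (by omega)) ?_ ?_)
  · refine hv.builderWinsIn_of_forced_even_chord (a := 0) (by omega) (hB₁ true) (by omega) ?_
    rw [Nat.zero_add]
    exact Or.inl (Set.mem_insert _ _)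
  · exact hv₁.builderWinsIn_of_blue_even_chord_of_red_odd_chord (by omega) (by omega) (hB₂ true)
      (Set.mem_insert _ _) (Set.mem_insert _ _)
  · refine hv₂.builderWinsIn_of_blue_odd_chord (by omega) (hB₂ false) (a := k - 2) (by omega) ?_
    rw [show k - 2 + 2 = k by omega, show k - 2 + 2 * (k - 1) + 1 = 3 * (k - 1) by omega]
    exact Set.mem_insert _ _

theorem isCycleIn_blueCycleBoard (m : ℕ) : IsCycleIn (blueCycleBoard m).2 m id :=
  ⟨Set.injOn_id _, Finset.forall_mem_image.2 fun i hi => ⟨i, Finset.mem_range.1 hi, rfl⟩⟩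

theorem finite_colored_blueCycleBoard (m : ℕ) : (blueCycleBoard m).colored.Finite := by
  refine (cycleEdges m id).finite_toSet.subset ?_
  rintro e (he | ⟨i, hi, rfl⟩)
  · exact absurd he (Set.notMem_empty e)
  · exact Finset.mem_image_of_mem _ (Finset.mem_range.2 hi)

/-- Shortening a blue cycle by one: if `k ≥ 3`, `n > 3k - 3` and the board contains a
blue cycle of length `n + 1`, then `r̃_H(C_k, C_n) ≤ k + 2`. -/
theorem shorten_blue_cycle_by_one (k n : ℕ) (hk : 3 ≤ k) (hn : 3 * k - 3 < n) :
    BuilderWinsIn (blueCycleBoard (n + 1)) (WinCC k n) (k + 2) := by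
  exact shorten_blue_cycle_by_one_general hk hn.le (finite_colored_blueCycleBoard _)
    ((hasCopy_cycleGraph_iff (by omega)).2 ⟨id, isCycleIn_blueCycleBoard _⟩)
end

section
/- Let n > 3k − 3, 0 ≤ h ≤ 2n, and let H be a blue cycle of length n + h. Then r̃_H(C_k, C_n) ≤ 3k + 10. -/
open SimpleGraph

/-!
Write the length of the blue cycle as `n + h`. Builder picks `k` vertices of the cycle whose
consecutive pairs are chords that shorten the cycle enough to win if they become blue. He selects
first the edge that closes them up to a `k`-cycle. If Painter colors it red, then Builder selects
the `k - 1` chords, and Painter either completes a red `C_k` or lets Builder win with a shorter blue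
cycle. So the closing edge becomes blue, at a cost of one round.

* For `h = 1`, once two such closing edges are blue, there is a `k`-cycle each of whose edges has
  length `2` or crosses one of them in such a way that it would give a blue `C_n` at once: `k + 2`
  rounds.
* For `3 h ≤ n + 2`, the chords have lengths `h` and `h + 1`, which lead to blue cycles of lengths
  `n + 1` and `n`. The closing edge and its translate by `h / 2 + 1`, when both blue, are crossing
  chords that reduce `h` to `h % 2`: `k + 2` rounds remain, or `(k - 1) + (k + 2)` after a red
  closing edge, hence `2 k + 3` rounds in all.
* For larger `h`, the chords have length about `h` and lead to the previous case, and each blue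
  closing edge reduces `h` by at least `(n + 2) / 3 - 1`. Eight such reductions suffice for
  `h ≤ 2 n`, which gives `8 + (k - 1) + (2 k + 3) = 3 k + 10` rounds.
-/

/-- The board obtained from `B` when Painter colors the edge `e` red. -/
abbrev Board.addRed (B : Board) (e : Sym2 ℕ) : Board := (insert e B.1, B.2)

/-- The board obtained from `B` when Painter colors the edge `e` blue. -/
abbrev Board.addBlue (B : Board) (e : Sym2 ℕ) : Board := (B.1, insert e B.2)

theorem Board.le_addBlue (B : Board) (e : Sym2 ℕ) : B ≤ B.addBlue e :=
  ⟨le_rfl, Set.subset_insert e B.2⟩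

theorem Board.le_addRed (B : Board) (e : Sym2 ℕ) : B ≤ B.addRed e :=
  ⟨Set.subset_insert e B.1, le_rfl⟩

theorem Board.addRed_mono {B B' : Board} (hB : B ≤ B') (e : Sym2 ℕ) : B.addRed e ≤ B'.addRed e :=
  ⟨Set.insert_subset_insert hB.1, hB.2⟩

theorem Board.addBlue_mono {B B' : Board} (hB : B ≤ B') (e : Sym2 ℕ) :
    B.addBlue e ≤ B'.addBlue e :=
  ⟨hB.1, Set.insert_subset_insert hB.2⟩

theorem Board.exists_fresh_edge {B : Board} (hB : B.colored.Finite) :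
    ∃ e : Sym2 ℕ, ¬ e.IsDiag ∧ e ∉ B.colored := by
  have hstar : Function.Injective fun i : ℕ => s(0, i + 1) := fun i j hij => by simpa using hij
  obtain ⟨_, ⟨i, rfl⟩, hi⟩ := (Set.infinite_range_of_injective hstar).exists_notMem_finite hB
  exact ⟨s(0, i + 1), by simp, hi⟩

theorem playGame_succ_eq_or (b : BuilderStrat) (p : PainterStrat) (B : Board) (t : ℕ) :
    playGame b p B (t + 1) = (playGame b p B t).addRed (b (playGame b p B t)) ∨
      playGame b p B (t + 1) = (playGame b p B t).addBlue (b (playGame b p B t)) := by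
  rw [playGame]
  exact ite_eq_or_eq _ _ _

theorem playGame_colored_finite (b : BuilderStrat) (p : PainterStrat) {B : Board}
    (hB : B.colored.Finite) (t : ℕ) : (playGame b p B t).colored.Finite := by
  induction t with
  | zero => exact hB
  | succ t ih =>
    rw [Board.colored, Set.finite_union] at ih ⊢
    rcases playGame_succ_eq_or b p B t with h | h <;> rw [h]
    · exact ⟨ih.1.insert _, ih.2⟩
    · exact ⟨ih.1, ih.2.insert _⟩

/-- `Forces W t B`: from the board `B`, Builder can force `W` within `t` rounds. This is the game
tree of Builder; unlike in `ValidFrom`, he may select an edge that is already colored, so that a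
plan made for a board remains a plan for every larger board. -/
inductive Forces (W : Board → Prop) : ℕ → Board → Prop
  | done {t : ℕ} {B : Board} : W B → Forces W t B
  | play {t : ℕ} {B : Board} (e : Sym2 ℕ) : ¬ e.IsDiag →
      Forces W t (B.addRed e) → Forces W t (B.addBlue e) → Forces W (t + 1) B

namespace Forces

variable {W : Board → Prop} {t t' : ℕ} {B B' : Board}

theorem mono_rounds (hF : Forces W t B) (ht : t ≤ t') : Forces W t' B := by
  induction hF generalizing t' with
  | done hW => exact .done hW
  | play e he _ _ ihred ihblue =>
    obtain ⟨u, rfl⟩ := Nat.exists_eq_add_of_le' (Nat.one_le_of_lt ht)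
    exact .play e he (ihred (by omega)) (ihblue (by omega))

theorem mono_board (hW : Monotone W) (hF : Forces W t B) (hB : B ≤ B') : Forces W t B' := by
  induction hF generalizing B' with
  | done h => exact .done (hW hB h)
  | play e he _ _ ihred ihblue =>
    exact .play e he (ihred (Board.addRed_mono hB e)) (ihblue (Board.addBlue_mono hB e))

-- Selecting an already colored edge leaves the board unchanged on one of the two branches, so the
-- first fresh edge along that branch may be selected instead.
theorem exists_fresh_edge (hF : Forces W t B) (hB : ¬ W B) :
    ∃ u < t, ∃ e : Sym2 ℕ, (¬ e.IsDiag ∧ e ∉ B.colored) ∧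
      Forces W u (B.addRed e) ∧ Forces W u (B.addBlue e) := by
  induction hF with
  | done h => exact absurd h hB
  | @play t B e he hred hblue ihred ihblue =>
    by_cases hr : e ∈ B.1
    · rw [Board.addRed, Set.insert_eq_of_mem hr] at ihred
      obtain ⟨u, hu, h⟩ := ihred hB
      exact ⟨u, by omega, h⟩
    by_cases hb : e ∈ B.2
    · rw [Board.addBlue, Set.insert_eq_of_mem hb] at ihblue
      obtain ⟨u, hu, h⟩ := ihblue hB
      exact ⟨u, by omega, h⟩
    exact ⟨t, t.lt_succ_self, e, ⟨he, not_or.2 ⟨hr, hb⟩⟩, hred, hblue⟩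

theorem exists_builderStrat (W : Board → Prop) :
    ∃ b : BuilderStrat, ∀ B : Board, B.colored.Finite →
      (¬ (b B).IsDiag ∧ b B ∉ B.colored) ∧
        (¬ W B → ∀ t, Forces W t B →
          ∃ u < t, Forces W u (B.addRed (b B)) ∧ Forces W u (B.addBlue (b B))) := by
  classical
  have hmove : ∀ B : Board, B.colored.Finite → ∃ e : Sym2 ℕ,
      (¬ e.IsDiag ∧ e ∉ B.colored) ∧
        (¬ W B → ∀ t, Forces W t B →
          ∃ u < t, Forces W u (B.addRed e) ∧ Forces W u (B.addBlue e)) := by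
    intro B hfin
    by_cases hopen : ¬ W B ∧ ∃ t, Forces W t B
    · -- A move that is good for the least number of rounds is good for every larger number.
      obtain ⟨u, hu, e, he, hnext⟩ := (Nat.find_spec hopen.2).exists_fresh_edge hopen.1
      exact ⟨e, he, fun _ t ht => ⟨u, hu.trans_le (Nat.find_min' hopen.2 ht), hnext⟩⟩
    · obtain ⟨e, he⟩ := Board.exists_fresh_edge hfin
      exact ⟨e, he, fun hB t ht => absurd ⟨hB, t, ht⟩ hopen⟩
  choose! b hb using hmove
  exact ⟨b, hb⟩

theorem builderWinsIn (hF : Forces W t B) (hB : B.colored.Finite) : BuilderWinsIn B W t := by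
  obtain ⟨b, hb⟩ := exists_builderStrat W
  have hfin (p : PainterStrat) (s : ℕ) := playGame_colored_finite b p hB s
  refine ⟨b, fun p s => (hb _ (hfin p s)).1, fun p => ?_⟩
  by_contra! hnot
  have hforces : ∀ s ≤ t + 1, ∃ u, u + s ≤ t ∧ Forces W u (playGame b p B s) := by
    intro s
    induction s with
    | zero => exact fun _ => ⟨t, le_rfl, hF⟩
    | succ s ih =>
      intro hs
      obtain ⟨u, hu, hFu⟩ := ih (by omega)
      obtain ⟨u', hu', hred, hblue⟩ := (hb _ (hfin p s)).2 (hnot s (by omega)) u hFu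
      refine ⟨u', by omega, ?_⟩
      rcases playGame_succ_eq_or b p B s with h | h <;> rw [h]
      exacts [hred, hblue]
  obtain ⟨u, hu, -⟩ := hforces (t + 1) le_rfl
  omega

theorem of_forall_blue (hW : Monotone W) (S : Finset (Sym2 ℕ)) (hloop : ∀ e ∈ S, ¬ e.IsDiag)
    (hblue : ∀ e ∈ S, Forces W t (B.addBlue e)) (hred : Forces W t (B.1 ∪ S, B.2)) :
    Forces W (t + S.card) B := by
  induction S using Finset.induction_on generalizing B with
  | empty => simpa using hred
  | insert e S heS ih =>
    rw [Finset.forall_mem_insert] at hloop hblue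
    rw [Finset.card_insert_of_notMem heS, ← add_assoc]
    refine .play e hloop.1 (ih hloop.2 (fun e' he' => ?_) ?_)
      (hblue.1.mono_rounds (Nat.le_add_right _ _))
    · exact (hblue.2 e' he').mono_board hW (Board.addBlue_mono (B.le_addRed e) e')
    · rwa [Board.addRed, Set.insert_union, ← Set.union_insert, ← Finset.coe_insert]

end Forces

theorem HasCopy.mono {α β : Type} {H : SimpleGraph α} {G G' : SimpleGraph β} (h : HasCopy H G)
    (hG : G ≤ G') : HasCopy H G' :=
  h.imp fun _ hf x y hxy => hG (hf x y hxy)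

theorem monotone_winCC (k n : ℕ) : Monotone (WinCC k n) := fun _ _ hB =>
  Or.imp (HasCopy.mono · (fromEdgeSet_mono hB.1)) (HasCopy.mono · (fromEdgeSet_mono hB.2))

/-- `f 0, …, f (m - 1)` are the consecutive vertices of a cycle with all edges in `U`. -/
structure IsCycleIn_s9 {V : Type*} (U : Set (Sym2 V)) (m : ℕ) (f : ℕ → V) : Prop where
  injOn : Set.InjOn f (Set.Iio m)
  edge : ∀ i, i + 1 < m → s(f i, f (i + 1)) ∈ U
  close : s(f (m - 1), f 0) ∈ U

namespace IsCycleIn_s9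

variable {V : Type*} {U U' : Set (Sym2 V)} {m : ℕ} {f : ℕ → V}

theorem mono_s9 (hf : IsCycleIn_s9 U m f) (hU : U ⊆ U') : IsCycleIn_s9 U' m f :=
  ⟨hf.injOn, fun i hi => hU (hf.edge i hi), hU hf.close⟩

theorem edge_of_eq_succ (hf : IsCycleIn_s9 U m f) {i j : ℕ} (hij : j = i + 1) (hj : j < m) :
    s(f i, f j) ∈ U := by
  subst hij
  exact hf.edge i hj

theorem edge_of_val_sub_eq_one (hf : IsCycleIn_s9 U m f) {x y : Fin m} (hxy : (y - x).val = 1) :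
    s(f x, f y) ∈ U := by
  have hx := x.isLt
  rcases le_or_gt x y with hle | hlt
  · rw [Fin.coe_sub_iff_le.2 hle] at hxy
    exact hf.edge_of_eq_succ (by omega) y.isLt
  · rw [Fin.coe_sub_iff_lt.2 hlt] at hxy
    obtain ⟨hx', hy'⟩ : x.val = m - 1 ∧ y.val = 0 := by omega
    rw [hx', hy']
    exact hf.close

theorem hasCopy {V : Type} {U : Set (Sym2 V)} {f : ℕ → V} (hf : IsCycleIn_s9 U m f) :
    HasCopy (cycleGraph m) (fromEdgeSet U) := by
  have hinj : Function.Injective fun x : Fin m => f x :=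
    fun x y hxy => Fin.ext (hf.injOn x.isLt y.isLt hxy)
  refine ⟨⟨_, hinj⟩, fun x y hxy => (fromEdgeSet_adj _).2 ⟨?_, hinj.ne hxy.ne⟩⟩
  rcases cycleGraph_adj'.1 hxy with h | h
  · rw [Sym2.eq_swap]
    exact hf.edge_of_val_sub_eq_one h
  · exact hf.edge_of_val_sub_eq_one h

theorem exists_of_chord (hf : IsCycleIn_s9 U m f) {p q : ℕ} (hp : p < m) (hq : q < m) (hpq : p ≠ q)
    (hU : s(f p, f q) ∈ U) : ∃ g, IsCycleIn_s9 U (m + 1 - Nat.dist p q) g := by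
  wlog hlt : p < q generalizing p q
  · rw [Nat.dist_comm]
    exact this hq hp hpq.symm (by rwa [Sym2.eq_swap]) (by omega)
  obtain ⟨d, rfl⟩ := Nat.exists_eq_add_of_lt hlt
  rw [Nat.dist_eq_sub_of_le hlt.le, show m + 1 - (p + d + 1 - p) = m - d by omega]
  refine ⟨fun i => f (if i ≤ p then i else i + d), fun i hi j hj hij => ?_, fun i hi => ?_, ?_⟩
  · rw [Set.mem_Iio] at hi hj
    have := hf.injOn (by grind) (by grind) hij
    grind
  · rcases lt_trichotomy i p with h | rfl | h
    · rw [if_pos h.le, if_pos (Nat.succ_le_of_lt h)]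
      exact hf.edge i (by omega)
    · rw [if_pos le_rfl, if_neg (by omega), show i + 1 + d = i + d + 1 by omega]
      exact hU
    · rw [if_neg h.not_ge, if_neg (by omega)]
      exact hf.edge_of_eq_succ (by omega) (by omega)
  · rw [if_neg (by omega), if_pos p.zero_le, show m - d - 1 + d = m - 1 by omega]
    exact hf.close

-- The new cycle runs from `0` to `p`, jumps to `q`, returns to `p'`, jumps to `q'` and runs on.
theorem exists_of_crossing_chords (hf : IsCycleIn_s9 U m f) {p p' q q' N : ℕ} (hp : p < p')
    (hpq : p' ≤ q) (hq : q < q') (hq' : q' < m) (hN : N + (p' - p) + (q' - q) = m + 2)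
    (hU : s(f p, f q) ∈ U) (hU' : s(f p', f q') ∈ U) : ∃ g, IsCycleIn_s9 U N g := by
  refine ⟨fun i => f (if i ≤ p then i else if i + p' ≤ p + q + 1 then p + q + 1 - i
    else i + (m - N)), fun i hi j hj hij => ?_, fun i hi => ?_, ?_⟩
  · rw [Set.mem_Iio] at hi hj
    have := hf.injOn (by grind) (by grind) hij
    grind
  · rcases lt_trichotomy i p with h | rfl | h
    · rw [if_pos h.le, if_pos (Nat.succ_le_of_lt h)]
      exact hf.edge i (by omega)
    · rw [if_pos le_rfl, if_neg (by omega), if_pos (by omega),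
        show i + q + 1 - (i + 1) = q by omega]
      exact hU
    · rw [if_neg h.not_ge, if_neg (show ¬ i + 1 ≤ p by omega)]
      rcases lt_trichotomy (i + p') (p + q + 1) with h' | h' | h'
      · rw [if_pos h'.le, if_pos (by omega), Sym2.eq_swap]
        exact hf.edge_of_eq_succ (by omega) (by omega)
      · rw [if_pos h'.le, if_neg (by omega), show p + q + 1 - i = p' by omega,
          show i + 1 + (m - N) = q' by omega]
        exact hU'
      · rw [if_neg (by omega), if_neg (by omega)]
        exact hf.edge_of_eq_succ (by omega) (by omega)
  · rw [if_neg (by omega), if_neg (by omega), if_pos p.zero_le,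
      show N - 1 + (m - N) = m - 1 by omega]
    exact hf.close

end IsCycleIn_s9

/-- From every board with a blue cycle of length `m`, Builder can force a red `C_k` or a blue `C_n`
within `t` rounds. -/
def WinsFromBlueCycle (k n m t : ℕ) : Prop :=
  ∀ (B : Board) (f : ℕ → ℕ), IsCycleIn_s9 B.2 m f → Forces (WinCC k n) t B

/-- `v 0, …, v (k - 1)` are distinct positions on a cycle of length `m`, any two consecutive ones
being the ends of a chord whose length, measured along the labels `0, …, m - 1` and not around the
cycle, is in `D`. -/
structure IsChordPath (D : Set ℕ) (m k : ℕ) (v : ℕ → ℕ) : Prop where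
  injOn : Set.InjOn v (Set.Iio k)
  lt : ∀ i < k, v i < m
  dist_mem : ∀ i, i + 1 < k → Nat.dist (v i) (v (i + 1)) ∈ D

theorem IsChordPath.add {D : Set ℕ} {m k a : ℕ} {v : ℕ → ℕ} (hv : IsChordPath D m k v)
    (ha : ∀ i < k, v i + a < m) : IsChordPath D m k fun i => v i + a where
  injOn _ hi _ hj hij := hv.injOn hi hj (Nat.add_right_cancel hij)
  lt := ha
  dist_mem i hi := by
    rw [Nat.dist_add_add_right]
    exact hv.dist_mem i hi

section Game

variable {k n m t T : ℕ} {B : Board} {f : ℕ → ℕ}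

theorem WinsFromBlueCycle.mono_s9 (hwin : WinsFromBlueCycle k n m t) (ht : t ≤ T) :
    WinsFromBlueCycle k n m T :=
  fun B f hf => (hwin B f hf).mono_rounds ht

theorem winsFromBlueCycle_self (k n t : ℕ) : WinsFromBlueCycle k n n t :=
  fun _ _ hf => .done (.inr hf.hasCopy)

theorem Forces.addBlue_chord (hf : IsCycleIn_s9 B.2 m f) {p q : ℕ} (hp : p < m) (hq : q < m)
    (hpq : p ≠ q) (hwin : WinsFromBlueCycle k n (m + 1 - Nat.dist p q) t) :
    Forces (WinCC k n) t (B.addBlue s(f p, f q)) := by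
  obtain ⟨g, hg⟩ := (hf.mono_s9 (B.le_addBlue _).2).exists_of_chord hp hq hpq (.inl rfl)
  exact hwin _ g hg

theorem Forces.addBlue_crossing_chord (hf : IsCycleIn_s9 B.2 m f) {p p' q q' N : ℕ} (hp : p < p')
    (hpq : p' ≤ q) (hq : q < q') (hq' : q' < m) (hN : N + (p' - p) + (q' - q) = m + 2)
    (hB : s(f p, f q) ∈ B.2) (hwin : WinsFromBlueCycle k n N t) :
    Forces (WinCC k n) t (B.addBlue s(f p', f q')) := by
  obtain ⟨g, hg⟩ := (hf.mono_s9 (B.le_addBlue _).2).exists_of_crossing_chords hp hpq hq hq' hN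
    (.inr hB) (.inl rfl)
  exact hwin _ g hg

-- Builder selects the closing edge first: if Painter colors it red, none of the remaining edges
-- may be colored blue, so Painter completes a red cycle.
theorem Forces.of_path {c : ℕ → ℕ} (hk : 2 ≤ k) (hc : Set.InjOn c (Set.Iio k))
    (hT : t + (k - 1) ≤ T)
    (hpath : ∀ i, i + 1 < k → Forces (WinCC k n) t (B.addBlue s(c i, c (i + 1))))
    (hclose : Forces (WinCC k n) T (B.addBlue s(c 0, c (k - 1)))) :
    Forces (WinCC k n) (T + 1) B := by
  have hne : ∀ i < k, ∀ j < k, i ≠ j → ¬ (s(c i, c j)).IsDiag := fun i hi j hj hij =>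
    mt Sym2.mk_isDiag_iff.1 (hc.ne hi hj hij)
  refine .play s(c 0, c (k - 1)) (hne _ (by omega) _ (by omega) (by omega)) ?_ hclose
  set P := (Finset.range (k - 1)).image fun i => s(c i, c (i + 1))
  have hP : t + P.card ≤ T := by
    have : P.card ≤ k - 1 := Finset.card_image_le.trans_eq (Finset.card_range _)
    omega
  refine (Forces.of_forall_blue (monotone_winCC k n) P ?_ ?_ (.done (.inl ?_))).mono_rounds hP
  · refine Finset.forall_mem_image.2 fun i hi => ?_
    have := Finset.mem_range.1 hi
    exact hne i (by omega) (i + 1) (by omega) (by omega)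
  · refine Finset.forall_mem_image.2 fun i hi => ?_
    have := Finset.mem_range.1 hi
    exact (hpath i (by omega)).mono_board (monotone_winCC k n)
      (Board.addBlue_mono (B.le_addRed _) _)
  · refine IsCycleIn_s9.hasCopy (f := c) ⟨hc, fun i hi => .inr ?_, .inl (.inl Sym2.eq_swap)⟩
    exact Finset.mem_image_of_mem _ (Finset.mem_range.2 (by omega))

theorem IsChordPath.forces {D : Set ℕ} {v : ℕ → ℕ} (hv : IsChordPath D m k v) (hk : 2 ≤ k)
    (hf : IsCycleIn_s9 B.2 m f) (hD : ∀ d ∈ D, WinsFromBlueCycle k n (m + 1 - d) t)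
    (hT : t + (k - 1) ≤ T)
    (hclose : Forces (WinCC k n) T (B.addBlue s(f (v 0), f (v (k - 1))))) :
    Forces (WinCC k n) (T + 1) B := by
  refine Forces.of_path (c := f ∘ v) hk (hf.injOn.comp hv.injOn hv.lt) hT (fun i hi => ?_) hclose
  exact Forces.addBlue_chord hf (hv.lt i (by omega)) (hv.lt (i + 1) hi)
    (hv.injOn.ne (Nat.lt_of_succ_lt hi) hi (Nat.lt_succ_self i).ne) (hD _ (hv.dist_mem i hi))

end Game

theorem isChordPath_two_mul_add {m k a : ℕ} (hm : 2 * (k - 1) + a < m) :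
    IsChordPath {2} m k fun i => 2 * i + a where
  injOn i _ j _ hij := by grind
  lt i hi := by omega
  dist_mem i _ := by
    rw [Set.mem_singleton_iff, Nat.dist_add_add_right, Nat.dist_mul_left, Nat.dist]
    omega

/-- The positions `k, k - 2, …`, down to `1` or `2`, followed by `2k` or `2k - 1`, and so on in
steps of `2` up to `3k - 3`. Against the blue chords `{0, 2k - 2}` and `{k - 2, 3k - 4}`, every edge
of the closed path through the first `k` of these positions shortens the cycle by one. -/
def turnaround (k i : ℕ) : ℕ :=
  if 2 * i < k then k - 2 * i else k - 1 + 2 * i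

theorem forces_of_two_blue_chords {k n : ℕ} (hk : 3 ≤ k) (hn : 3 * k ≤ n + 3) {B : Board}
    {f : ℕ → ℕ} (hf : IsCycleIn_s9 B.2 (n + 1) f) (hB : s(f 0, f (2 * k - 2)) ∈ B.2)
    (hB' : s(f (k - 2), f (3 * k - 4)) ∈ B.2) : Forces (WinCC k n) k B := by
  have hwin : WinsFromBlueCycle k n n 0 := winsFromBlueCycle_self k n 0
  have hlt : ∀ i < k, turnaround k i < n + 1 := fun i hi => by grind [turnaround]
  have hinj : Set.InjOn (turnaround k) (Set.Iio k) := fun i _ j _ hij => by grind [turnaround]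
  have hstep : ∀ i, i + 1 < k → (2 * (i + 1) < k ∨ k ≤ 2 * i) →
      Nat.dist (turnaround k i) (turnaround k (i + 1)) = 2 := fun i _ _ => by
    grind [turnaround, Nat.dist]
  obtain ⟨T, rfl⟩ := Nat.exists_eq_add_of_le' (Nat.one_le_of_lt hk)
  refine Forces.of_path (c := f ∘ turnaround (T + 1)) (t := 0) (by omega)
    (hf.injOn.comp hinj hlt) (by omega) (fun i hi => ?_) (.mono_rounds (t := 0) ?_ T.zero_le)
  · by_cases hturn : 2 * i < T + 1 ∧ T + 1 ≤ 2 * (i + 1)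
    · refine Forces.addBlue_crossing_chord hf (p := 0) (q := 2 * (T + 1) - 2) ?_ ?_ ?_ ?_ ?_ hB hwin
        <;> grind [turnaround]
    · refine Forces.addBlue_chord hf (hlt i (by omega)) (hlt (i + 1) hi)
        (hinj.ne (Nat.lt_of_succ_lt hi) hi (Nat.lt_succ_self i).ne) ?_
      rw [hstep i hi (by omega)]
      exact hwin
  · refine Forces.addBlue_crossing_chord hf (p := T + 1 - 2) (q := 3 * (T + 1) - 4) ?_ ?_ ?_ ?_ ?_
      hB' hwin <;> grind [turnaround]

theorem winsFromBlueCycle_add_one {k n : ℕ} (hk : 3 ≤ k) (hn : 3 * k ≤ n + 2) :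
    WinsFromBlueCycle k n (n + 1) (k + 2) := by
  intro B f hf
  have hwin : ∀ d ∈ ({2} : Set ℕ), WinsFromBlueCycle k n (n + 1 + 1 - d) 0 := by
    rintro d rfl
    exact winsFromBlueCycle_self k n 0
  refine (isChordPath_two_mul_add (a := 0) (by omega)).forces (by omega) hf hwin (by omega) ?_
  set B₁ := B.addBlue s(f (2 * 0 + 0), f (2 * (k - 1) + 0))
  have hf₁ : IsCycleIn_s9 B₁.2 (n + 1) f := hf.mono_s9 (B.le_addBlue _).2
  refine (isChordPath_two_mul_add (a := k - 2) (by omega)).forces (by omega) hf₁ hwin (by omega) ?_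
  refine forces_of_two_blue_chords hk (by omega) (hf₁.mono_s9 (B₁.le_addBlue _).2) (.inr ?_) ?_
  · rw [show 2 * k - 2 = 2 * (k - 1) + 0 by omega]
    exact .inl rfl
  · rw [show 3 * k - 4 = 2 * (k - 1) + (k - 2) by omega,
      show f (k - 2) = f (2 * 0 + (k - 2)) by rw [mul_zero, zero_add]]
    exact .inl rfl

theorem winsFromBlueCycle_add_of_le_one {k n h : ℕ} (hk : 3 ≤ k) (hn : 3 * k ≤ n + 2)
    (hh : h ≤ 1) : WinsFromBlueCycle k n (n + h) (k + 2) := by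
  interval_cases h
  · exact winsFromBlueCycle_self k n (k + 2)
  · exact winsFromBlueCycle_add_one hk hn

/-- The sequence `0, h + 1, 1, h + 2, 2, …` whose steps are alternately `+ (h + 1)` and `- h`. Its
first `2h + 2` terms are distinct. -/
def ladder (h r : ℕ) : ℕ :=
  if r % 2 = 0 then r / 2 else h + 1 + r / 2

/-- The first `2h + 2` terms of `ladder h`, repeated with an offset of `3h + 2` from each block to
the next, so that all steps are `+ (h + 1)` or `- h` and all terms are distinct. -/
def zigzag (h j : ℕ) : ℕ :=
  (3 * h + 2) * (j / (2 * h + 2)) + ladder h (j % (2 * h + 2))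

theorem zigzag_mul_add {h r : ℕ} (hr : r < 2 * h + 2) (q : ℕ) :
    zigzag h ((2 * h + 2) * q + r) = (3 * h + 2) * q + ladder h r := by
  rw [zigzag, Nat.mul_add_div (by omega), Nat.div_eq_of_lt hr, add_zero, Nat.mul_add_mod,
    Nat.mod_eq_of_lt hr]

theorem injOn_ladder (h : ℕ) : Set.InjOn (ladder h) (Set.Iio (2 * h + 2)) :=
  fun r _ r' _ hrr' => by grind [ladder]

theorem ladder_lt {h r : ℕ} (hr : r < 2 * h + 2) : ladder h r < 3 * h + 2 := by
  grind [ladder]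

theorem dist_ladder_succ (h r : ℕ) :
    Nat.dist (ladder h r) (ladder h (r + 1)) ∈ ({h, h + 1} : Set ℕ) := by
  grind [ladder, Nat.dist]

theorem zigzag_injective (h : ℕ) : Function.Injective (zigzag h) := by
  intro i j hij
  have hi := ladder_lt (Nat.mod_lt i (2 * h + 1).succ_pos)
  have hj := ladder_lt (Nat.mod_lt j (2 * h + 1).succ_pos)
  have hdiv : i / (2 * h + 2) = j / (2 * h + 2) := by
    have := congrArg (· / (3 * h + 2)) hij
    simpa only [zigzag, Nat.mul_add_div (3 * h + 1).succ_pos, Nat.div_eq_of_lt hi,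
      Nat.div_eq_of_lt hj, add_zero] using this
  have hmod : i % (2 * h + 2) = j % (2 * h + 2) := by
    rw [zigzag, zigzag, hdiv] at hij
    exact injOn_ladder h (Nat.mod_lt i (2 * h + 1).succ_pos) (Nat.mod_lt j (2 * h + 1).succ_pos)
      (Nat.add_left_cancel hij)
  rw [← Nat.div_add_mod i (2 * h + 2), hdiv, hmod, Nat.div_add_mod]

theorem dist_zigzag_succ (h j : ℕ) :
    Nat.dist (zigzag h j) (zigzag h (j + 1)) ∈ ({h, h + 1} : Set ℕ) := by
  obtain ⟨q, r, hr, rfl⟩ : ∃ q r, r < 2 * h + 2 ∧ j = (2 * h + 2) * q + r :=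
    ⟨_, _, Nat.mod_lt j (2 * h + 1).succ_pos, (Nat.div_add_mod j _).symm⟩
  rw [zigzag_mul_add hr, add_assoc]
  rcases Nat.lt_or_ge (r + 1) (2 * h + 2) with hr' | hr'
  · rw [zigzag_mul_add hr', Nat.dist_add_add_left]
    exact dist_ladder_succ h r
  · have hblock : (2 * h + 2) * q + (r + 1) = (2 * h + 2) * (q + 1) + 0 := by
      rw [mul_add_one]
      omega
    rw [hblock, zigzag_mul_add (by omega), mul_add_one, add_assoc, Nat.dist_add_add_left]
    grind [ladder, Nat.dist]

theorem two_mul_zigzag_lt {h : ℕ} (hh : 0 < h) (j : ℕ) : 2 * zigzag h j < 3 * j + 2 * h := by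
  obtain ⟨q, r, hr, rfl⟩ : ∃ q r, r < 2 * h + 2 ∧ j = (2 * h + 2) * q + r :=
    ⟨_, _, Nat.mod_lt j (2 * h + 1).succ_pos, (Nat.div_add_mod j _).symm⟩
  have hladder : 2 * ladder h r < 3 * r + 2 * h := by grind [ladder]
  rw [zigzag_mul_add hr]
  linarith [q.zero_le]

/-- The sequence `zigzag h`, moved up by `h` and preceded by `0`: all steps have length `h` or
`h + 1`, and every later term is at least `h`, so that closing edges are long enough to cross. -/
def zeroZigzag (h : ℕ) : ℕ → ℕ
  | 0 => 0
  | j + 1 => zigzag h j + h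

theorem isChordPath_zeroZigzag {h k m : ℕ} (hh : 0 < h) (hm : ∀ i < k, zeroZigzag h i < m) :
    IsChordPath {h, h + 1} m k (zeroZigzag h) where
  injOn i _ j _ hij := by
    match i, j with
    | 0, 0 => rfl
    | 0, j + 1 | i + 1, 0 => simp only [zeroZigzag] at hij; omega
    | i + 1, j + 1 => rw [zigzag_injective h (Nat.add_right_cancel hij)]
  lt := hm
  dist_mem i _ := by
    match i with
    | 0 => exact .inl (by simp [zeroZigzag, zigzag, ladder, Nat.dist_zero_left])
    | i + 1 =>
      rw [zeroZigzag, zeroZigzag, Nat.dist_add_add_right]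
      exact dist_zigzag_succ h i

theorem zeroZigzag_add_lt {h k n i : ℕ} (hh : 0 < h) (hn : 3 * k ≤ n + 2) (hhn : 3 * h ≤ n + 2)
    (hi : i < k) : zeroZigzag h i + (h / 2 + 1) < n + h := by
  match i with
  | 0 => rw [zeroZigzag]; omega
  | j + 1 =>
    have := two_mul_zigzag_lt hh j
    rw [zeroZigzag]
    omega

theorem winsFromBlueCycle_add_of_three_mul_le {k n h : ℕ} (hk : 3 ≤ k) (hn : 3 * k ≤ n + 2)
    (hh : 3 * h ≤ n + 2) : WinsFromBlueCycle k n (n + h) (2 * k + 3) := by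
  rcases h.eq_zero_or_pos with rfl | hpos
  · exact winsFromBlueCycle_self k n (2 * k + 3)
  have hwin : ∀ d ∈ ({h, h + 1} : Set ℕ), WinsFromBlueCycle k n (n + h + 1 - d) (k + 2) := by
    intro d hd
    rw [show n + h + 1 - d = n + (h + 1 - d) by grind]
    exact winsFromBlueCycle_add_of_le_one hk hn (by grind)
  have hlt (i : ℕ) (hi : i < k) := zeroZigzag_add_lt hpos hn hh hi
  have hv : IsChordPath {h, h + 1} (n + h) k (zeroZigzag h) :=
    isChordPath_zeroZigzag hpos fun i hi => (Nat.le_add_right _ _).trans_lt (hlt i hi)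
  have hlast : h ≤ zeroZigzag h (k - 1) := by
    obtain ⟨j, hj⟩ : ∃ j, k - 1 = j + 1 := ⟨k - 2, by omega⟩
    rw [hj]
    exact Nat.le_add_left h _
  intro B f hf
  refine hv.forces (by omega) hf hwin (by omega) ?_
  set B₁ := B.addBlue s(f (zeroZigzag h 0), f (zeroZigzag h (k - 1)))
  have hf₁ : IsCycleIn_s9 B₁.2 (n + h) f := hf.mono_s9 (B.le_addBlue _).2
  refine (hv.add hlt).forces (by omega) hf₁ hwin (by omega) ?_
  have hlt_last := hlt (k - 1) (by omega)
  refine Forces.mono_rounds (t := k + 2) ?_ (by omega)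
  refine Forces.addBlue_crossing_chord hf₁ (N := n + h % 2) (by omega)
    (by rw [zeroZigzag]; omega) (by omega) (by omega) (by omega) (.inl rfl) ?_
  exact winsFromBlueCycle_add_of_le_one hk hn (by omega)

theorem exists_isChordPath_Icc {k m h w : ℕ} (hk : 2 ≤ k) (hkw : k ≤ w) (hwh : w < h)
    (hm : h + w < m) : ∃ v, IsChordPath (Set.Icc (h + 1 - w) (h + 1)) m k v ∧ v 0 = 0 ∧
      v (k - 1) ∈ Set.Icc w h := by
  refine ⟨Function.update (ladder h) (k - 1) (if k % 2 = 0 then h else w),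
    ⟨fun i hi j hj hij => ?_, fun i hi => ?_, fun i hi => ?_⟩, ?_, ?_⟩
  · grind [Function.update_apply, ladder]
  · grind [Function.update_apply, ladder]
  · grind [Function.update_apply, ladder, Nat.dist]
  · grind [Function.update_apply, ladder]
  · grind [Function.update_apply]

theorem winsFromBlueCycle_add {k n h : ℕ} (hk : 3 ≤ k) (hn : 3 * k ≤ n + 2) (j : ℕ)
    (hh : h ≤ (j + 1) * ((n + 2) / 3 - 1) + 1) : WinsFromBlueCycle k n (n + h) (3 * k + 2 + j) := by
  have hsmall (h : ℕ) (hh : h ≤ (n + 2) / 3) : WinsFromBlueCycle k n (n + h) (2 * k + 3) :=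
    winsFromBlueCycle_add_of_three_mul_le hk hn (by omega)
  induction j generalizing h with
  | zero => exact (hsmall h (by omega)).mono_s9 (by omega)
  | succ j ih =>
    rcases le_or_gt h ((n + 2) / 3) with hle | hlt
    · exact (hsmall h hle).mono_s9 (by omega)
    obtain ⟨v, hv, hfirst, hlast⟩ := exists_isChordPath_Icc (k := k) (m := n + h)
      (by omega) (by omega) hlt (by omega)
    rw [Set.mem_Icc] at hlast
    rw [add_one_mul] at hh
    intro B f hf
    refine hv.forces (t := 2 * k + 3) (T := 3 * k + 2 + j) (by omega) hf (fun d hd => ?_)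
      (by omega) ?_
    · rw [Set.mem_Icc] at hd
      rw [show n + h + 1 - d = n + (h + 1 - d) by omega]
      exact hsmall _ (by omega)
    · refine Forces.addBlue_chord hf (hv.lt 0 (by omega)) (hv.lt (k - 1) (by omega)) (by omega) ?_
      rw [hfirst, Nat.dist_zero_left,
        show n + h + 1 - v (k - 1) = n + (h + 1 - v (k - 1)) by omega]
      exact ih (by omega)

theorem isCycleIn_blueCycleBoard_s9 {m : ℕ} (hm : 0 < m) : IsCycleIn_s9 (blueCycleBoard m).2 m id where
  injOn := Set.injOn_id _
  edge i hi := ⟨i, by omega, by rw [Nat.mod_eq_of_lt hi]; rfl⟩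
  close := ⟨m - 1, by omega, by rw [Nat.sub_add_cancel hm, Nat.mod_self]; rfl⟩

theorem shorten_blue_cycle_general {k n h j : ℕ} (hk : 3 ≤ k) (hn : 3 * k - 3 < n)
    (hh : h ≤ (j + 1) * ((n + 2) / 3 - 1) + 1) {B : Board} {f : ℕ → ℕ} (hB : B.colored.Finite)
    (hf : IsCycleIn_s9 B.2 (n + h) f) : BuilderWinsIn B (WinCC k n) (3 * k + 2 + j) :=
  (winsFromBlueCycle_add hk (by omega) j hh B f hf).builderWinsIn hB

/-- Shortening arbitrary blue cycles: if `n > 3k - 3`, `0 ≤ h ≤ 2n` and the board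
contains a blue cycle of length `n + h`, then `r̃_H(C_k, C_n) ≤ 3k + 10`. -/
theorem shorten_blue_cycle (k n h : ℕ) (hk : 3 ≤ k) (hn : 3 * k - 3 < n)
    (hh : h ≤ 2 * n) :
    BuilderWinsIn (blueCycleBoard (n + h)) (WinCC k n) (3 * k + 10) :=
  shorten_blue_cycle_general (j := 8) hk hn (by omega) (finite_colored_blueCycleBoard _)
    (isCycleIn_blueCycleBoard_s9 (by omega))
end
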